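/- Let W_H, ..., W₁ ∈ GL_d(ℝ) be balanced (W_{i+1}ᵀW_{i+1} = W_iW_iᵀ for all i) with product W = W_H⋯W₁. If G_{H-1}, ..., G₁ ∈ GL_d(ℝ) are such that the matrices (W_H G_{H-1}, G_{H-1}^{-1} W_{H-1} G_{H-2}, ..., G₁^{-1}W₁) are also balanced, then every G_j is orthogonal. -/

import Mathlib

open Matrix

/-! The Gram matrices of the partial products of a balanced chain are powers of a single one:
`(Wₖ ⋯ W₁)ᵀ (Wₖ ⋯ W₁) = (W₁ᵀ W₁)ᵏ`. If a second balanced chain `V` satisfies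
`Gₗ Vₗ = Wₗ Gₗ₋₁`, then `Gₖ Vₖ ⋯ V₁ = Wₖ ⋯ W₁ G₀`, and at `k = H` the isometry `G_H` drops out of
the Gram matrix. Uniqueness of the nonnegative `H`-th root therefore identifies `V₁ᵀ V₁` with
`(W₁ G₀)ᵀ (W₁ G₀)`. Taking `j`-th powers, the Gram matrices of `Vⱼ ⋯ V₁` and `Gⱼ Vⱼ ⋯ V₁` agree,
and cancelling `Vⱼ ⋯ V₁` leaves `Gⱼᵀ Gⱼ = 1`. With `ᵀ` read as `star`, only a star algebra with a
real functional calculus is involved. -/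

section LayerProd

variable {M : Type*} [Monoid M] {V W G : ℕ → M} {k : ℕ}

/-- The product `W k * ⋯ * W 1` of the first `k` layers of a linear network. Layers are numbered
from `1`, so `W 0` does not occur. -/
def layerProd (W : ℕ → M) : ℕ → M
  | 0 => 1
  | k + 1 => W (k + 1) * layerProd W k

lemma mul_layerProd_eq_layerProd_mul (h : ∀ l < k, G (l + 1) * V (l + 1) = W (l + 1) * G l) :
    G k * layerProd V k = layerProd W k * G 0 := by
  induction k with
  | zero => simp only [layerProd, mul_one, one_mul]
  | succ k ih =>
    simp only [layerProd]
    rw [← mul_assoc, h k k.lt_succ_self, mul_assoc, ih fun l hl => h l (hl.trans k.lt_succ_self),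
      mul_assoc]

lemma isRightRegular_layerProd (h : ∀ l < k, IsRightRegular (V (l + 1))) :
    IsRightRegular (layerProd V k) := by
  induction k with
  | zero => exact isRegular_one.right
  | succ k ih => exact (h k k.lt_succ_self).mul (ih fun l hl => h l (hl.trans k.lt_succ_self))

end LayerProd

/-- The layers `W H, …, W 1` of a linear network are balanced: consecutive layers satisfy
`star (W (i + 1)) * W (i + 1) = W i * star (W i)`. For real matrices `star` is the transpose. -/
def IsBalancedChain {M : Type*} [Mul M] [Star M] (H : ℕ) (W : ℕ → M) : Prop :=
  ∀ i, 1 ≤ i → i < H → star (W (i + 1)) * W (i + 1) = W i * star (W i)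

lemma isBalancedChain_iff_transpose {n R : Type*} [Fintype n] [NonUnitalNonAssocSemiring R]
    [StarRing R] [TrivialStar R] {H : ℕ} {W : ℕ → Matrix n n R} :
    IsBalancedChain H W ↔ ∀ i, 1 ≤ i → i < H → (W (i + 1))ᵀ * W (i + 1) = W i * (W i)ᵀ := by
  simp only [IsBalancedChain, star_eq_conjTranspose, conjTranspose_eq_transpose_of_trivial]

section Gram

variable {M : Type*} [Monoid M] [StarMul M] {V W G : ℕ → M} {H k : ℕ}

lemma IsBalancedChain.star_mul_layerProd_succ (hW : IsBalancedChain H W) (hk : k < H) :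
    star (W (k + 1)) * layerProd W (k + 1) = layerProd W k * (star (W 1) * W 1) := by
  induction k with
  | zero => simp only [layerProd, mul_one, one_mul, zero_add]
  | succ k ih =>
    calc star (W (k + 2)) * layerProd W (k + 2)
        = (star (W (k + 2)) * W (k + 2)) * layerProd W (k + 1) := (mul_assoc ..).symm
      _ = W (k + 1) * (star (W (k + 1)) * layerProd W (k + 1)) := by
        rw [hW (k + 1) k.succ_pos hk, mul_assoc]
      _ = layerProd W (k + 1) * (star (W 1) * W 1) := by
        rw [ih (k.lt_succ_self.trans hk), ← mul_assoc, layerProd]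

lemma IsBalancedChain.star_layerProd_mul_self (hW : IsBalancedChain H W) (hk : k ≤ H) :
    star (layerProd W k) * layerProd W k = (star (W 1) * W 1) ^ k := by
  induction k with
  | zero => simp only [layerProd, star_one, mul_one, pow_zero]
  | succ k ih =>
    calc star (layerProd W (k + 1)) * layerProd W (k + 1)
        = star (layerProd W k) * (star (W (k + 1)) * layerProd W (k + 1)) := by
          simp only [layerProd, star_mul, mul_assoc]
      _ = (star (W 1) * W 1) ^ (k + 1) := by
        rw [hW.star_mul_layerProd_succ hk, ← mul_assoc, ih (Nat.le_of_succ_le hk), pow_succ]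

lemma star_mul_pow_mul_of_mem_unitary {u : M} (hu : u ∈ unitary M) (x : M) (k : ℕ) :
    star u * x ^ k * u = (star u * x * u) ^ k :=
  ((Unitary.toUnits ⟨u, hu⟩).conj_pow' x k).symm

lemma IsBalancedChain.star_mul_layerProd_mul_self (hW : IsBalancedChain H W) (hk : k ≤ H)
    (hG0 : G 0 ∈ unitary M) (hGVW : ∀ l < k, G (l + 1) * V (l + 1) = W (l + 1) * G l) :
    star (G k * layerProd V k) * (G k * layerProd V k) = (star (W 1 * G 0) * (W 1 * G 0)) ^ k := by
  calc star (G k * layerProd V k) * (G k * layerProd V k)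
      = star (G 0) * (star (layerProd W k) * layerProd W k) * G 0 := by
        simp only [mul_layerProd_eq_layerProd_mul hGVW, star_mul, mul_assoc]
    _ = (star (G 0) * (star (W 1) * W 1) * G 0) ^ k := by
      rw [hW.star_layerProd_mul_self hk, star_mul_pow_mul_of_mem_unitary hG0]
    _ = (star (W 1 * G 0) * (W 1 * G 0)) ^ k := by
      simp only [star_mul, mul_assoc]

lemma star_mul_self_eq_one_of_isRightRegular {g q : M} (hq : IsRightRegular q)
    (h : star (g * q) * (g * q) = star q * q) : star g * g = 1 := by
  apply hq.star.eq_iff.mp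
  apply hq.eq_iff.mp
  simpa only [star_mul, mul_assoc, mul_one] using h

end Gram

section FunctionalCalculus

variable {A : Type*} [Ring A] [StarRing A] [PartialOrder A] [StarOrderedRing A] [Algebra ℝ A]
  [TopologicalSpace A] [IsSemitopologicalRing A] [T2Space A]
  [ContinuousFunctionalCalculus ℝ A IsSelfAdjoint] [NonnegSpectrumClass ℝ A]

lemma pow_rpow_inv_natCast_of_nonneg {a : A} (ha : 0 ≤ a) {n : ℕ} (hn : n ≠ 0) :
    (a ^ n) ^ (n : ℝ)⁻¹ = a := by
  rw [← CFC.rpow_natCast a n, CFC.rpow_rpow_of_exponent_nonneg a _ _ (by positivity)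
    (by positivity), mul_inv_cancel₀ (Nat.cast_ne_zero.mpr hn), CFC.rpow_one a]

lemma pow_left_injOn_nonneg {n : ℕ} (hn : n ≠ 0) : Set.InjOn (fun a : A => a ^ n) (Set.Ici 0) :=
  Set.LeftInvOn.injOn (f₁' := (· ^ (n : ℝ)⁻¹)) fun _ ha => pow_rpow_inv_natCast_of_nonneg ha hn

variable {V W G : ℕ → A} {H : ℕ}

theorem IsBalancedChain.star_mul_self_eq_one_of_intertwining {j : ℕ} (hj : j < H)
    (hV : IsBalancedChain H V) (hW : IsBalancedChain H W)
    (hGVW : ∀ l < H, G (l + 1) * V (l + 1) = W (l + 1) * G l)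
    (hVreg : ∀ l < j, IsRightRegular (V (l + 1)))
    (hG0 : G 0 ∈ unitary A) (hGH : star (G H) * G H = 1) :
    star (G j) * G j = 1 := by
  have first_gram_eq : star (V 1) * V 1 = star (W 1 * G 0) * (W 1 * G 0) := by
    apply pow_left_injOn_nonneg (Nat.ne_zero_of_lt hj) (star_mul_self_nonneg _)
      (star_mul_self_nonneg _)
    calc (star (V 1) * V 1) ^ H
        = star (layerProd V H) * layerProd V H := (hV.star_layerProd_mul_self le_rfl).symm
      _ = star (G H * layerProd V H) * (G H * layerProd V H) := by
        rw [star_mul, mul_assoc, ← mul_assoc (star (G H)), hGH, one_mul]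
      _ = (star (W 1 * G 0) * (W 1 * G 0)) ^ H :=
        hW.star_mul_layerProd_mul_self le_rfl hG0 hGVW
  apply star_mul_self_eq_one_of_isRightRegular (isRightRegular_layerProd hVreg)
  rw [hW.star_mul_layerProd_mul_self hj.le hG0 fun l hl => hGVW l (hl.trans hj), ← first_gram_eq,
    hV.star_layerProd_mul_self hj.le]

theorem stmt_12_general (hW : ∀ l, 1 ≤ l → l < H → IsRightRegular (W l))
    (hG : ∀ j, 1 ≤ j → j < H → IsUnit (G j)) (hG0 : G 0 ∈ unitary A) (hGH : G H ∈ unitary A)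
    (hbal : IsBalancedChain H W)
    (hbal' : IsBalancedChain H fun l => Ring.inverse (G l) * W l * G (l - 1)) :
    ∀ j < H, G j ∈ unitary A := by
  have isUnit_G (l : ℕ) (hl : l ≤ H) : IsUnit (G l) := by
    rcases l.eq_zero_or_pos with rfl | hl_pos
    · exact Unitary.isUnit_coe (U := ⟨_, hG0⟩)
    rcases hl.eq_or_lt with rfl | hl_lt
    · exact Unitary.isUnit_coe (U := ⟨_, hGH⟩)
    · exact hG l hl_pos hl_lt
  intro j hjH
  refine (isUnit_G j hjH.le).mem_unitary_iff_star_mul_self.mpr <|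
    hbal'.star_mul_self_eq_one_of_intertwining hjH hbal (fun l hl => ?_) (fun l hl => ?_) hG0
      (Unitary.star_mul_self_of_mem hGH)
  · rw [mul_assoc, Ring.mul_inverse_cancel_left _ _ (isUnit_G (l + 1) hl), Nat.add_sub_cancel]
  · have hlH : l + 1 < H := by omega
    exact ((isUnit_G _ hlH.le).ringInverse.isRegular.right.mul (hW _ l.succ_pos hlH)).mul
      (isUnit_G l (by omega)).isRegular.right

end FunctionalCalculus

/-- If the invertible matrices W_H,...,W₁ are balanced and the modified tuple
(W_H G_{H-1}, G_{H-1}⁻¹ W_{H-1} G_{H-2}, ..., G₁⁻¹ W₁) is also balanced (with invertible G_j),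
then every G_j is orthogonal. Layers are indexed 1,...,H, with the convention G 0 = G H = 1,
so layer l of the modified tuple is (G l)⁻¹ * W l * G (l-1). -/
theorem stmt_12 (d H : ℕ) (hH : 1 ≤ H)
    (W G : ℕ → Matrix (Fin d) (Fin d) ℝ)
    (hWinv : ∀ l, 1 ≤ l → l ≤ H → IsUnit (W l))
    (hGinv : ∀ j, 1 ≤ j → j < H → IsUnit (G j))
    (hG0 : G 0 = 1) (hGH : G H = 1)
    (hbal : ∀ i, 1 ≤ i → i < H → (W (i + 1))ᵀ * W (i + 1) = W i * (W i)ᵀ)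
    (hbal' : ∀ i, 1 ≤ i → i < H →
      ((G (i + 1))⁻¹ * W (i + 1) * G i)ᵀ * ((G (i + 1))⁻¹ * W (i + 1) * G i)
        = ((G i)⁻¹ * W i * G (i - 1)) * ((G i)⁻¹ * W i * G (i - 1))ᵀ) :
    ∀ j, 1 ≤ j → j < H → (G j)ᵀ * G j = 1 := by
  simp only [nonsing_inv_eq_ringInverse] at hbal'
  open scoped MatrixOrder in
  exact fun j _ hjH => (stmt_12_general (fun l hl hlH => (hWinv l hl hlH.le).isRegular.right) hGinv
    (hG0 ▸ one_mem _) (hGH ▸ one_mem _) (isBalancedChain_iff_transpose.mpr hbal)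
    (isBalancedChain_iff_transpose.mpr hbal') j hjH).1
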